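/- Fix an integer d ≥ 1 and let B = [−1/2, 1/2]^d ⊂ ℝ^d. Let L ∈ GL(d,ℝ) with operator norm ‖L‖ < 1, set J = |det L|, let H ≥ 1 be an integer, and let v₀, v₁, …, v_H ∈ B be such that each affine map L_j(z) = L·z + v_j (0 ≤ j ≤ H) sends B into the interior of B; for a word j̲ = (j₁, …, j_n) ∈ {1,…,H}^n write L_{j̲} = L_{j_n} ∘ ⋯ ∘ L_{j₁}. Assume there exists β > 1 such that for every n ≥ 1 and every x ∈ ℝ^d, the number of words j̲ ∈ {1,…,H}^n with x ∈ L_{j̲}(B) is at most β^n. Then for all integers n ≥ 1 and 1 ≤ m ≤ n, the set A of points x ∈ B that belong to at least (1/2)·J^{n+1}·H^n of the sets L₀(L_{j̲}(B)), j̲ ∈ {1,…,H}^n, is compact, has Lebesgue measure at least (1/2)·J^{n+1}·(H/β)^n, and moreover every x ∈ A belongs to at least (1/2)·J^{n+1}·H^n·β^{m−n} of the sets L₀(L_{j̲}(B)) whose index words j̲ have pairwise distinct final segments (j_{n−m+1}, …, j_n). -/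

import Mathlib

/-!
Write `C w = f₀(f_w(B))` for the sets of the image family, `r` for the common ratio by which the
maps scale `μ`, and `N(x)` for the number of words `w` with `x ∈ C w`. Integrating `N` gives
`∑ μ(C w) = r^{n+1} H^n μ(B) = 2t μ(B)`, where `t` is the depth threshold. Since `N ≤ β^n`, with
`N < t` on `B` off the deep set `A`, also `∑ μ(C w) ≤ β^n μ(A) + t μ(B)`, whence
`t μ(B) ≤ β^n μ(A)`.

If `x ∈ C w` and `w` ends in `s`, then the unique preimage of `x` under `f₀ ∘ f_s` lies in
`f_u(B)`, where `u` is the remaining prefix of length `n - m`. So at most `β^{n-m}` words through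
`x` share the final segment `s`, and one word for each segment that occurs gives the subfamily.
-/

open MeasureTheory

/-- The closed cube `[−1/2,1/2]^d` in `ℝ^d`. -/
def unitCube (d : ℕ) : Set (EuclideanSpace ℝ (Fin d)) :=
  {x | ∀ i, |x i| ≤ 1 / 2}

/-- `wordMap L v n w` is the composition `L_{w n} ∘ ⋯ ∘ L_{w 1}` of the affine contractions
`L_j z = L z + v j` along the word `w = (w 1, …, w n)` (first letter applied first). -/
noncomputable def wordMap {d H : ℕ}
    (L : EuclideanSpace ℝ (Fin d) →L[ℝ] EuclideanSpace ℝ (Fin d))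
    (v : Fin H → EuclideanSpace ℝ (Fin d)) :
    (n : ℕ) → (Fin n → Fin H) → EuclideanSpace ℝ (Fin d) → EuclideanSpace ℝ (Fin d)
  | 0, _, z => z
  | n + 1, w, z => L (wordMap L v n (fun i => w i.castSucc) z) + v (w (Fin.last n))

open scoped ENNReal

section CoverCount

variable {X Y ι : Type*}

/-- The multiplicity with which the family `C` covers `x`: the number of indices `i` with
`x ∈ C i`, or the junk value `0` if there are infinitely many. -/
noncomputable def coverCount (C : ι → Set X) (x : X) : ℕ :=
  Nat.card {i // x ∈ C i}

/-- The points of `B` of depth at least `t`, that is, covered at least `t` times by the family `C`.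
The threshold is real since it need not be an integer in the application. -/
def deepSet (B : Set X) (C : ι → Set X) (t : ℝ) : Set X :=
  {x | x ∈ B ∧ t ≤ coverCount C x}

lemma exists_coverCount_image_le {g : X → Y} (hg : g.Injective) [Nonempty X] (C : ι → Set X)
    (y : Y) : ∃ x, coverCount (fun i => g '' C i) y ≤ coverCount C x := by
  by_cases hy : y ∈ Set.range g
  · obtain ⟨x, rfl⟩ := hy
    exact ⟨x, by simp only [coverCount, hg.mem_set_image, le_refl]⟩
  · have hempty : IsEmpty {i // y ∈ g '' C i} := ⟨fun i => hy (Set.image_subset_range _ _ i.2)⟩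
    exact ⟨Classical.arbitrary X, by simp only [coverCount, Nat.card_of_isEmpty, zero_le]⟩

open Classical in
lemma coverCount_eq_card [Fintype ι] (C : ι → Set X) (x : X) :
    coverCount C x = Finset.card {i | x ∈ C i} :=
  Nat.subtype_card _ (by simp)

lemma natCast_coverCount_eq_sum_indicator [Fintype ι] {R : Type*} [NonAssocSemiring R]
    (C : ι → Set X) (x : X) : (coverCount C x : R) = ∑ i, (C i).indicator (fun _ => 1) x := by
  classical
  simp only [coverCount_eq_card, Finset.natCast_card_filter, Set.indicator_apply]

lemma upperSemicontinuous_coverCount [Finite ι] [TopologicalSpace X] {C : ι → Set X}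
    (hC : ∀ i, IsClosed (C i)) : UpperSemicontinuous fun x => (coverCount C x : ℝ) := by
  have := Fintype.ofFinite ι
  simp only [natCast_coverCount_eq_sum_indicator]
  exact upperSemicontinuous_sum fun i _ => (hC i).upperSemicontinuous_indicator zero_le_one

lemma isCompact_deepSet [Finite ι] [TopologicalSpace X] {B : Set X} (hB : IsCompact B)
    {C : ι → Set X} (hC : ∀ i, IsClosed (C i)) (t : ℝ) : IsCompact (deepSet B C t) :=
  hB.inter_right ((upperSemicontinuous_coverCount hC).isClosed_preimage t)

section Measure

variable [MeasurableSpace X] {C : ι → Set X} (hC : ∀ i, MeasurableSet (C i))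
include hC

lemma measurable_coverCount [Finite ι] {R : Type*} [NonAssocSemiring R] [MeasurableSpace R]
    [MeasurableAdd₂ R] : Measurable fun x => (coverCount C x : R) := by
  have := Fintype.ofFinite ι
  simp only [natCast_coverCount_eq_sum_indicator]
  exact Finset.measurable_sum _ fun i _ => measurable_const.indicator (hC i)

variable [Fintype ι]

lemma lintegral_coverCount (μ : Measure X) : ∫⁻ x, coverCount C x ∂μ = ∑ i, μ (C i) := by
  simp only [natCast_coverCount_eq_sum_indicator]
  rw [lintegral_finsetSum _ fun i _ => measurable_const.indicator (hC i)]
  simp only [lintegral_indicator_const (hC _), one_mul]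

variable {B : Set X} {M t : ℝ} (hCB : ∀ i, C i ⊆ B) (hM : ∀ x, coverCount C x ≤ M)
include hCB hM

lemma sum_measure_le_deepSet_add (μ : Measure X) (hB : MeasurableSet B) :
    ∑ i, μ (C i) ≤ .ofReal M * μ (deepSet B C t) + .ofReal t * μ B := by
  have hA : MeasurableSet (deepSet B C t) :=
    hB.inter (measurable_coverCount hC measurableSet_Ici)
  have hpoint (x : X) : (coverCount C x : ℝ≥0∞) ≤
      (deepSet B C t).indicator (fun _ => .ofReal M) x + B.indicator (fun _ => .ofReal t) x := by
    rw [← ENNReal.ofReal_natCast]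
    by_cases hxB : x ∈ B
    · by_cases hxt : t ≤ coverCount C x
      · rw [Set.indicator_of_mem (show x ∈ deepSet B C t from ⟨hxB, hxt⟩)]
        exact (ENNReal.ofReal_le_ofReal (hM x)).trans le_self_add
      · rw [Set.indicator_of_mem hxB]
        exact (ENNReal.ofReal_le_ofReal (not_le.1 hxt).le).trans le_add_self
    · have hempty : IsEmpty {i // x ∈ C i} := ⟨fun i => hxB (hCB i i.2)⟩
      simp only [coverCount, Nat.card_of_isEmpty, Nat.cast_zero, ENNReal.ofReal_zero, zero_le]
  calc ∑ i, μ (C i) = ∫⁻ x, coverCount C x ∂μ := (lintegral_coverCount hC μ).symm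
    _ ≤ ∫⁻ x, (deepSet B C t).indicator (fun _ => .ofReal M) x +
          B.indicator (fun _ => .ofReal t) x ∂μ := lintegral_mono hpoint
    _ = .ofReal M * μ (deepSet B C t) + .ofReal t * μ B := by
      rw [lintegral_add_left (measurable_const.indicator hA), lintegral_indicator_const hA,
        lintegral_indicator_const hB]

lemma ofReal_div_mul_measure_le_measure_deepSet (μ : Measure X) (hB : MeasurableSet B)
    (hμB : μ B ≠ ∞) (hM0 : 0 < M) (hsum : .ofReal (2 * t) * μ B ≤ ∑ i, μ (C i)) :
    .ofReal (t / M) * μ B ≤ μ (deepSet B C t) := by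
  have hle : ENNReal.ofReal t * μ B ≤ .ofReal M * μ (deepSet B C t) := by
    have hfin : ENNReal.ofReal t * μ B ≠ ∞ := ENNReal.mul_ne_top ENNReal.ofReal_ne_top hμB
    refine (ENNReal.add_le_add_iff_right hfin).1 ?_
    rw [← two_mul, ← mul_assoc, ← ENNReal.ofReal_ofNat 2, ← ENNReal.ofReal_mul zero_le_two]
    exact hsum.trans (sum_measure_le_deepSet_add hC hCB hM μ hB)
  rw [ENNReal.ofReal_div_of_pos hM0, ← ENNReal.mul_div_right_comm]
  exact ENNReal.div_le_of_le_mul' hle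

end Measure

end CoverCount

lemma exists_subset_injOn_card_le_mul {α γ R : Type*} [DecidableEq γ] [Semiring R] [PartialOrder R]
    [IsOrderedRing R] (W : Finset α) (f : α → γ) {M : R}
    (hM : ∀ c ∈ W.image f, (Finset.card {w ∈ W | f w = c} : R) ≤ M) :
    ∃ S ⊆ W, Set.InjOn f S ∧ (W.card : R) ≤ M * S.card := by
  obtain ⟨S, hSW, hinj, himage⟩ := Finset.exists_subset_injOn_image_eq_of_surjOn (f := f) W
    (W.image f) (by simp [Set.surjOn_image])
  refine ⟨S, by exact_mod_cast hSW, hinj, ?_⟩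
  calc (W.card : R) = ∑ c ∈ W.image f, (Finset.card {w ∈ W | f w = c} : R) := by
        rw [Finset.card_eq_sum_card_image f W, Nat.cast_sum]
    _ ≤ (W.image f).card • M := Finset.sum_le_card_nsmul _ _ _ hM
    _ = M * S.card := by
      rw [← himage, Finset.card_image_of_injOn hinj, nsmul_eq_mul, Nat.cast_comm]

section Words

variable {X ι : Type*}

/-- The composition `f_{w (n-1)} ∘ ⋯ ∘ f_{w 0}` along a word `w` of length `n`; as in `wordMap`,
the first letter is applied first. -/
def compWord (f : ι → X → X) : {n : ℕ} → (Fin n → ι) → X → X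
  | 0, _ => id
  | n + 1, w => f (w (Fin.last n)) ∘ compWord f (Fin.init w)

lemma compWord_snoc (f : ι → X → X) {n : ℕ} (w : Fin n → ι) (i : ι) :
    compWord f (Fin.snoc w i : Fin (n + 1) → ι) = f i ∘ compWord f w := by
  simp only [compWord, Fin.snoc_last, Fin.init_snoc]

lemma compWord_append (f : ι → X → X) {k m : ℕ} (u : Fin k → ι) (s : Fin m → ι) :
    compWord f (Fin.append u s) = compWord f s ∘ compWord f u := by
  induction s using Fin.snocInduction with
  | elim0 => simp [compWord]
  | snoc s i ih => rw [Fin.append_snoc, compWord_snoc, compWord_snoc, ih, Function.comp_assoc]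

lemma injective_compWord {f : ι → X → X} (hf : ∀ i, (f i).Injective) {n : ℕ} (w : Fin n → ι) :
    (compWord f w).Injective := by
  induction n with
  | zero => exact Function.injective_id
  | succ n ih => exact (hf _).comp (ih _)

open Classical in
lemma card_filter_finalSegment_le [Fintype ι] {k m : ℕ} (C : (Fin (k + m) → ι) → Set X)
    (x : X) (s : Fin m → ι) :
    Finset.card {w ∈ {w | x ∈ C w} | w ∘ Fin.natAdd k = s} ≤
      coverCount (fun u => C (Fin.append u s)) x := by
  rw [coverCount_eq_card]
  refine Finset.card_le_card_of_surjOn (Fin.append · s) fun w hw => ?_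
  obtain ⟨hxw, rfl⟩ : x ∈ C w ∧ w ∘ Fin.natAdd k = s := by simpa using hw
  have happend : Fin.append (w ∘ Fin.castAdd m) (w ∘ Fin.natAdd k) = w :=
    Fin.append_castAdd_natAdd
  exact ⟨w ∘ Fin.castAdd m, by simpa [happend] using hxw, happend⟩

lemma exists_finset_injOn_finalSegment [Finite ι] {k m : ℕ} (C : (Fin (k + m) → ι) → Set X)
    (x : X) {M : ℝ} (hM : ∀ s : Fin m → ι, coverCount (fun u => C (Fin.append u s)) x ≤ M) :
    ∃ S : Finset (Fin (k + m) → ι), (coverCount C x : ℝ) ≤ M * S.card ∧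
      Set.InjOn (· ∘ Fin.natAdd k) (S : Set (Fin (k + m) → ι)) ∧ ∀ w ∈ S, x ∈ C w := by
  classical
  have := Fintype.ofFinite ι
  obtain ⟨S, hSW, hinj, hcard⟩ := exists_subset_injOn_card_le_mul {w | x ∈ C w}
    (· ∘ Fin.natAdd k) fun s _ =>
      (Nat.cast_le.2 (card_filter_finalSegment_le C x s)).trans (hM s)
  exact ⟨S, by rwa [coverCount_eq_card], hinj, fun w hw => by simpa using hSW hw⟩

end Words

/-- A continuous injective map that sends `B` into itself and scales the measure `μ` by the factor
`r`; it abstracts what is needed of the affine maps `L_j`, for which `r = |det L|`. -/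
structure IsScalingSelfMap {X : Type*} [TopologicalSpace X] [MeasurableSpace X] (μ : Measure X)
    (B : Set X) (r : ℝ≥0∞) (g : X → X) : Prop where
  continuous : Continuous g
  injective : Function.Injective g
  mapsTo : Set.MapsTo g B B
  measure_image : ∀ s, μ (g '' s) = r * μ s

namespace IsScalingSelfMap

section

variable {X ι : Type*} [TopologicalSpace X] [MeasurableSpace X] {μ : Measure X} {B : Set X}
  {r q : ℝ≥0∞} {g h : X → X}

protected lemma id : IsScalingSelfMap μ B 1 id where
  continuous := continuous_id
  injective := Function.injective_id
  mapsTo := Set.mapsTo_id B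
  measure_image s := by rw [Set.image_id, one_mul]

protected lemma comp (hg : IsScalingSelfMap μ B r g) (hh : IsScalingSelfMap μ B q h) :
    IsScalingSelfMap μ B (r * q) (g ∘ h) where
  continuous := hg.continuous.comp hh.continuous
  injective := hg.injective.comp hh.injective
  mapsTo := hg.mapsTo.comp hh.mapsTo
  measure_image s := by rw [Set.image_comp, hg.measure_image, hh.measure_image, mul_assoc]

protected lemma compWord {f : ι → X → X} (hf : ∀ i, IsScalingSelfMap μ B r (f i)) {n : ℕ}
    (w : Fin n → ι) : IsScalingSelfMap μ B (r ^ n) (compWord f w) := by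
  induction n with
  | zero => exact pow_zero r ▸ IsScalingSelfMap.id
  | succ n ih => exact pow_succ' r n ▸ (hf _).comp (ih _)

end

lemma affine {E : Type*} [NormedAddCommGroup E] [NormedSpace ℝ E] [FiniteDimensional ℝ E]
    [MeasurableSpace E] [BorelSpace E] (μ : Measure E) [μ.IsAddHaarMeasure] {L : E →L[ℝ] E}
    (hL : Function.Injective L) {c : E} {B : Set E} (hB : ∀ z ∈ B, L z + c ∈ B) :
    IsScalingSelfMap μ B (.ofReal |LinearMap.det L.toLinearMap|) (fun z => L z + c) where
  continuous := L.continuous.add continuous_const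
  injective := (add_left_injective c).comp hL
  mapsTo := hB
  measure_image s := by
    rw [← Set.image_image (· + c) L, Set.image_add_right, measure_preimage_add_right,
      Measure.addHaar_image_continuousLinearMap]

end IsScalingSelfMap

section ImageFamily

variable {X ι : Type*}

/-- The image family `f₀(f_w(B))` of the claim, indexed by the words `w` of length `n`. -/
def imageFamily (f₀ : X → X) (f : ι → X → X) (B : Set X) (n : ℕ) (w : Fin n → ι) : Set X :=
  (f₀ ∘ compWord f w) '' B

variable {f₀ : X → X} {f : ι → X → X} {B : Set X} {β : ℝ}

lemma coverCount_compWord_le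
    (hcount : ∀ n, 1 ≤ n → ∀ x, coverCount (fun w : Fin n → ι => compWord f w '' B) x ≤ β ^ n)
    (n : ℕ) (x : X) : coverCount (fun w : Fin n → ι => compWord f w '' B) x ≤ β ^ n := by
  obtain rfl | hn := n.eq_zero_or_pos
  · rw [pow_zero]
    exact_mod_cast Finite.card_le_one_iff_subsingleton.2 inferInstance
  · exact hcount n hn x

lemma coverCount_imageFamily_le (hf₀ : f₀.Injective)
    (hcount : ∀ n, 1 ≤ n → ∀ x, coverCount (fun w : Fin n → ι => compWord f w '' B) x ≤ β ^ n)
    (n : ℕ) (x : X) : coverCount (imageFamily f₀ f B n) x ≤ β ^ n := by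
  have : Nonempty X := ⟨x⟩
  obtain ⟨y, hy⟩ := exists_coverCount_image_le hf₀ (fun w : Fin n → ι => compWord f w '' B) x
  simp only [← Set.image_comp] at hy
  exact (Nat.cast_le.2 hy).trans (coverCount_compWord_le hcount n y)

lemma imageFamily_append {k m : ℕ} (u : Fin k → ι) (s : Fin m → ι) :
    imageFamily f₀ f B (k + m) (Fin.append u s) = imageFamily (f₀ ∘ compWord f s) f B k u := by
  rw [imageFamily, compWord_append, imageFamily, Function.comp_assoc]

lemma exists_finset_imageFamily_injOn_finalSegment [Finite ι] (hf₀ : f₀.Injective)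
    (hf : ∀ i, (f i).Injective)
    (hcount : ∀ n, 1 ≤ n → ∀ x, coverCount (fun w : Fin n → ι => compWord f w '' B) x ≤ β ^ n)
    (k m : ℕ) (x : X) :
    ∃ S : Finset (Fin (k + m) → ι),
      (coverCount (imageFamily f₀ f B (k + m)) x : ℝ) ≤ β ^ k * S.card ∧
      Set.InjOn (· ∘ Fin.natAdd k) (S : Set (Fin (k + m) → ι)) ∧
      ∀ w ∈ S, x ∈ imageFamily f₀ f B (k + m) w := by
  refine exists_finset_injOn_finalSegment _ x fun s => ?_
  simp only [imageFamily_append]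
  exact coverCount_imageFamily_le (hf₀.comp (injective_compWord hf s)) hcount k x

end ImageFamily

lemma IsScalingSelfMap.sum_measure_imageFamily {X ι : Type*} [TopologicalSpace X]
    [MeasurableSpace X] [Fintype ι] {μ : Measure X} {B : Set X} {r : ℝ≥0∞} {f₀ : X → X}
    {f : ι → X → X} (hf₀ : IsScalingSelfMap μ B r f₀) (hf : ∀ i, IsScalingSelfMap μ B r (f i))
    (n : ℕ) :
    ∑ w, μ (imageFamily f₀ f B n w) = r ^ (n + 1) * Fintype.card ι ^ n * μ B := by
  have hμ (w : Fin n → ι) : μ (imageFamily f₀ f B n w) = r ^ (n + 1) * μ B := by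
    rw [imageFamily, (hf₀.comp (.compWord hf w)).measure_image, ← pow_succ']
  simp only [hμ, Finset.sum_const, Finset.card_univ, Fintype.card_fun, Fintype.card_fin,
    nsmul_eq_mul, Nat.cast_pow]
  ring

theorem ifs_deep_points_pigeonhole_general {X ι : Type*} [TopologicalSpace X] [T2Space X]
    [MeasurableSpace X] [OpensMeasurableSpace X] [Fintype ι] {μ : Measure X} {B : Set X}
    (hB : IsCompact B) (hμB : μ B ≠ ∞) {J β : ℝ} (hJ : 0 ≤ J) (hβ : 0 < β) {f₀ : X → X}
    {f : ι → X → X} (hf₀ : IsScalingSelfMap μ B (.ofReal J) f₀)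
    (hf : ∀ i, IsScalingSelfMap μ B (.ofReal J) (f i))
    (hcount : ∀ n, 1 ≤ n → ∀ x, coverCount (fun w : Fin n → ι => compWord f w '' B) x ≤ β ^ n)
    {n m : ℕ} (hmn : m ≤ n) :
    let A := deepSet B (imageFamily f₀ f B n) (1 / 2 * J ^ (n + 1) * Fintype.card ι ^ n)
    IsCompact A ∧
    .ofReal (1 / 2 * J ^ (n + 1) * (Fintype.card ι / β) ^ n) * μ B ≤ μ A ∧
    ∀ x ∈ A, ∃ S : Finset (Fin n → ι),
      1 / 2 * J ^ (n + 1) * Fintype.card ι ^ n * β ^ ((m : ℝ) - n) ≤ S.card ∧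
      (∀ w1 ∈ S, ∀ w2 ∈ S, w1 ≠ w2 → ∃ i : Fin n, n - m ≤ i ∧ w1 i ≠ w2 i) ∧
      ∀ w ∈ S, x ∈ imageFamily f₀ f B n w := by
  intro A
  have hg (w : Fin n → ι) := hf₀.comp (.compWord hf w)
  have hclosed (w : Fin n → ι) : IsClosed (imageFamily f₀ f B n w) :=
    (hB.image (hg w).continuous).isClosed
  refine ⟨isCompact_deepSet hB hclosed _, ?_, ?_⟩
  · rw [div_pow, ← mul_div_assoc]
    refine ofReal_div_mul_measure_le_measure_deepSet (fun w => (hclosed w).measurableSet)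
      (fun w => (hg w).mapsTo.image_subset)
      (coverCount_imageFamily_le hf₀.injective hcount n) μ hB.measurableSet hμB (by positivity) ?_
    have htwo : 2 * (1 / 2 * J ^ (n + 1) * Fintype.card ι ^ n) =
        J ^ (n + 1) * (Fintype.card ι : ℝ) ^ n := by ring
    rw [htwo, hf₀.sum_measure_imageFamily hf, ENNReal.ofReal_mul (pow_nonneg hJ _),
      ENNReal.ofReal_pow hJ, ENNReal.ofReal_pow (Nat.cast_nonneg _), ENNReal.ofReal_natCast]
  · rintro x ⟨-, hx⟩
    obtain ⟨k, rfl⟩ := Nat.exists_eq_add_of_le' hmn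
    obtain ⟨S, hcard, hinj, hxS⟩ := exists_finset_imageFamily_injOn_finalSegment hf₀.injective
      (fun i => (hf i).injective) hcount k m x
    refine ⟨S, ?_, ?_, hxS⟩
    · rw [Nat.cast_add, sub_add_cancel_right, Real.rpow_neg hβ.le, Real.rpow_natCast,
        ← div_eq_mul_inv, div_le_iff₀' (pow_pos hβ k)]
      exact hx.trans hcard
    · intro w1 hw1 w2 hw2 hne
      by_contra! hagree
      exact hne (hinj hw1 hw2 (funext fun i => hagree _ (by simp)))

lemma unitCube_eq_preimage_Icc (d : ℕ) :
    unitCube d = WithLp.ofLp ⁻¹' Set.Icc (fun _ => -(1 / 2 : ℝ)) (fun _ => 1 / 2) := by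
  ext x
  simp only [unitCube, Set.mem_ofPred_eq, Set.mem_preimage, Set.mem_Icc, Pi.le_def, abs_le,
    forall_and]

lemma volume_unitCube (d : ℕ) : volume (unitCube d) = 1 := by
  rw [unitCube_eq_preimage_Icc, (PiLp.volume_preserving_ofLp (Fin d)).measure_preimage
    measurableSet_Icc.nullMeasurableSet, Real.volume_Icc_pi]
  norm_num

lemma isCompact_unitCube (d : ℕ) : IsCompact (unitCube d) := by
  rw [unitCube_eq_preimage_Icc]
  exact (PiLp.homeomorph 2 fun _ : Fin d => ℝ).isCompact_preimage.2 isCompact_Icc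

lemma wordMap_eq_compWord {d H : ℕ} (L : EuclideanSpace ℝ (Fin d) →L[ℝ] EuclideanSpace ℝ (Fin d))
    (v : Fin H → EuclideanSpace ℝ (Fin d)) (n : ℕ) (w : Fin n → Fin H) :
    wordMap L v n w = compWord (fun j z => L z + v j) w := by
  induction n with
  | zero => rfl
  | succ n ih =>
    funext z
    exact congrArg (fun y => L y + v (w (Fin.last n))) (congrFun (ih (Fin.init w)) z)

/-- **Pigeonhole claim on deep points of the image family.**  The set `A` of points of the
cube lying in at least `½·J^{n+1}·H^n` of the images `L₀(L_{j̲}(B))` is compact, of Lebesgue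
measure at least `½·J^{n+1}·(H/β)^n`, and each of its points lies in at least
`½·J^{n+1}·H^n·β^{m−n}` of these images indexed by words with pairwise distinct final
segments of length `m`. -/
theorem ifs_deep_points_pigeonhole
    (d : ℕ) (hd : 1 ≤ d)
    (L : EuclideanSpace ℝ (Fin d) →L[ℝ] EuclideanSpace ℝ (Fin d))
    (hLbij : Function.Bijective L) (hLnorm : ‖L‖ < 1)
    (H : ℕ) (hH : 1 ≤ H)
    (v0 : EuclideanSpace ℝ (Fin d)) (v : Fin H → EuclideanSpace ℝ (Fin d))
    (hv0 : v0 ∈ unitCube d) (hv : ∀ j, v j ∈ unitCube d)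
    (hmap0 : ∀ z ∈ unitCube d, L z + v0 ∈ interior (unitCube d))
    (hmap : ∀ j : Fin H, ∀ z ∈ unitCube d, L z + v j ∈ interior (unitCube d))
    (J : ℝ) (hJ : J = |LinearMap.det L.toLinearMap|)
    (β : ℝ) (hβ : 1 < β)
    (hcount : ∀ n : ℕ, 1 ≤ n → ∀ x : EuclideanSpace ℝ (Fin d),
      (Nat.card {w : Fin n → Fin H // x ∈ wordMap L v n w '' unitCube d} : ℝ) ≤ β ^ n)
    (n m : ℕ) (hn : 1 ≤ n) (hm1 : 1 ≤ m) (hmn : m ≤ n) :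
    IsCompact {x | x ∈ unitCube d ∧
        (1 / 2 : ℝ) * J ^ (n + 1) * (H : ℝ) ^ n ≤
          (Nat.card {w : Fin n → Fin H //
            x ∈ (fun z => L (wordMap L v n w z) + v0) '' unitCube d} : ℝ)} ∧
    ENNReal.ofReal ((1 / 2 : ℝ) * J ^ (n + 1) * ((H : ℝ) / β) ^ n) ≤
      volume {x | x ∈ unitCube d ∧
        (1 / 2 : ℝ) * J ^ (n + 1) * (H : ℝ) ^ n ≤
          (Nat.card {w : Fin n → Fin H //
            x ∈ (fun z => L (wordMap L v n w z) + v0) '' unitCube d} : ℝ)} ∧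
    ∀ x ∈ {x | x ∈ unitCube d ∧
        (1 / 2 : ℝ) * J ^ (n + 1) * (H : ℝ) ^ n ≤
          (Nat.card {w : Fin n → Fin H //
            x ∈ (fun z => L (wordMap L v n w z) + v0) '' unitCube d} : ℝ)},
      ∃ S : Finset (Fin n → Fin H),
        (1 / 2 : ℝ) * J ^ (n + 1) * (H : ℝ) ^ n * β ^ ((m : ℝ) - (n : ℝ)) ≤ (S.card : ℝ) ∧
        (∀ w1 ∈ S, ∀ w2 ∈ S, w1 ≠ w2 →
          ∃ i : Fin n, n - m ≤ (i : ℕ) ∧ w1 i ≠ w2 i) ∧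
        (∀ w ∈ S, x ∈ (fun z => L (wordMap L v n w z) + v0) '' unitCube d) := by
  subst hJ
  simp only [wordMap_eq_compWord] at hcount ⊢
  simpa only [volume_unitCube, mul_one, Fintype.card_fin, deepSet,
    coverCount, imageFamily, Function.comp_def] using
    ifs_deep_points_pigeonhole_general (isCompact_unitCube d) (by simp [volume_unitCube])
      (abs_nonneg _) (one_pos.trans hβ)
      (.affine volume hLbij.1 fun z hz => interior_subset (hmap0 z hz))
      (fun j => .affine volume hLbij.1 fun z hz => interior_subset (hmap j z hz)) hcount hmn
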